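/- If the multiplicative characters χ₁ and χ₂ of F_q are not both fourth powers (i.e., it is not the case that there exist multiplicative characters ν₁, ν₂ with χ₁ = ν₁⁴ and χ₂ = ν₂⁴), then T(χ₁,χ₂) = 0. -/

import Mathlib

/-!
Let `φ = A₄ ^ 2` be the quadratic character and let `i ^ 2 = -1`. A character `χ` of the cyclic
group `Fˣ` is a fourth power exactly when `χ i = 1`, so it suffices to show `P(ij, k) = P(j, k)`:
then `T(χ₁, χ₂) = χ₁ i * T(χ₁, χ₂)`, and likewise for `χ₂` because `P` is symmetric.

Writing `φ (a / x - x)` as a sum of additive characters, and `K` for the Kloosterman sum, one finds,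
for nonzero `j` and `k` and `q = |F|`,
`q P(j, k) = q ([j² = k²] + [j² = -k²]) + ∑ t, φ t * K(1, a ((j² + k²)² - (t - 2jk)²))`.
Replacing `j` by `ij` exchanges the two indicators. After the substitution `t ↦ it` it also replaces
`(t - b)²` by `b² - (t - b)²`, where `b = 2jk`, and multiplies the sum by `φ i = φ 2`. This leaves
the sum unchanged: if `r² + w² = b²`, then `2 (b + r) (b + w) = (b + r + w)²`, so the values of `φ`
at the `t` with `(t - b)² = r²` are `φ 2` times those at the `t` with `(t - b)² = w²`. When `d` is a
square and `b² - d` is not, the values of `φ` at the `t` with `(t - b)² = d` cancel.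
-/

open Finset

noncomputable section

variable {F : Type} [Field F] [Fintype F] [DecidableEq F]

/-- Katz's mixed character sum `P(j,k)`; the quadratic character `φ` is `A₄ ^ 2`. -/
def Pkatz (ψ : AddChar F ℂ) (A₄ : MulChar F ℂ) (a : F) (j k : F) : ℂ :=
  (if j = k then 1 else 0) + (A₄ ^ 2) (-1) * (if j = -k then 1 else 0) +
    (gaussSum (A₄ ^ 2) ψ)⁻¹ *
      ∑ x ∈ univ.filter (fun x : F => x ≠ 0),
        (A₄ ^ 2) (a / x - x) * ψ (x * (j + k) ^ 2 + (a / x) * (j - k) ^ 2)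

/-- Katz's sums `V(j)`. -/
def Vkatz (ψ : AddChar F ℂ) (A₄ : MulChar F ℂ) (a : F) (τ : ℂ) (j : F) : ℂ :=
  if j = 0 then gaussSum A₄ ψ / τ + τ / gaussSum A₄ ψ
  else τ⁻¹ * ∑ x ∈ univ.filter (fun x : F => x ≠ 0), A₄ x * ψ (x + a * j ^ 4 / x)

/-- The finite field hypergeometric function `₂F₁(A,B;C|x)`. -/
def hyp2F1 (A B C : MulChar F ℂ) (x : F) : ℂ :=
  ((1 : MulChar F ℂ) x / (Fintype.card F : ℂ)) *
    ∑ y : F, B y * (B⁻¹ * C) (y - 1) * A⁻¹ (1 - x * y)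

/-- The Jacobi sum `J(A,B)`. -/
def Jsum (A B : MulChar F ℂ) : ℂ := ∑ y : F, A y * B (1 - y)

/-- The sum `h(D,j)`; the quadratic character `φ` is `A₄ ^ 2`. -/
def hKatz (A₄ D : MulChar F ℂ) (j : F) : ℂ :=
  ∑ x ∈ univ.filter (fun x : F => x ≠ 0),
    D x * (A₄ ^ 2) (1 - x) * ((D⁻¹ ^ 2) * A₄ ^ 2) (x * (j + 1) ^ 2 + (j - 1) ^ 2)

/-- The sum `H(λ₁)`; the quadratic character `φ` is `A₄ ^ 2`. -/
def Hkatz (A₄ lam : MulChar F ℂ) (a : F) : ℂ :=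
  ∑ p ∈ (univ ×ˢ univ).filter
      (fun p : F × F => p.1 ≠ 0 ∧ p.2 ≠ 0 ∧
        p.2 * (p.1 + 1) ^ 2 + a * (p.1 - 1) ^ 2 / p.2 = 0),
    (lam ^ 2 * A₄ ^ 2) p.1 * (A₄ ^ 2) (p.2 - a / p.2)

/-- The Mellin transform `S(χ)` of the sums `V(j)`. -/
def Smel (ψ : AddChar F ℂ) (A₄ : MulChar F ℂ) (a : F) (τ : ℂ) (χ : MulChar F ℂ) : ℂ :=
  ∑ j ∈ univ.filter (fun j : F => j ≠ 0), χ j * Vkatz ψ A₄ a τ j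

/-- The Mellin transform `T(χ)` of the sums `P(j,0)`. -/
def Tmel (ψ : AddChar F ℂ) (A₄ : MulChar F ℂ) (a : F) (χ : MulChar F ℂ) : ℂ :=
  ∑ j ∈ univ.filter (fun j : F => j ≠ 0), χ j * Pkatz ψ A₄ a j 0

/-- The double Mellin transform `T(χ₁,χ₂)` of the sums `P(j,k)`. -/
def Tmel2 (ψ : AddChar F ℂ) (A₄ : MulChar F ℂ) (a : F) (χ₁ χ₂ : MulChar F ℂ) : ℂ :=
  ∑ j ∈ univ.filter (fun j : F => j ≠ 0), ∑ k ∈ univ.filter (fun k : F => k ≠ 0),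
    χ₁ j * χ₂ k * Pkatz ψ A₄ a j k

end

theorem exists_eq_pow_of_apply_primitiveRoot_eq_one {F K : Type*} [Field F] [Finite F] [Field K]
    [IsAlgClosed K] {n : ℕ} [NeZero n] {ζ : F} (hζ : IsPrimitiveRoot ζ n) {χ : MulChar F K}
    (hχ : χ ζ = 1) : ∃ ν : MulChar F K, χ = ν ^ n := by
  classical
  have := Fintype.ofFinite F
  obtain ⟨g, hg⟩ := IsCyclic.exists_generator (α := Fˣ)
  have hζ_unit : IsPrimitiveRoot (hζ.isUnit (NeZero.ne n)).unit n :=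
    IsPrimitiveRoot.coe_units_iff.mp hζ
  obtain ⟨m, hm⟩ : n ∣ Fintype.card Fˣ := hζ_unit.eq_orderOf ▸ orderOf_dvd_card
  have hgm : ((g : F) ^ m) ^ n = 1 := by
    rw [← pow_mul', ← hm, ← Units.val_pow_eq_pow_val, pow_card_eq_one, Units.val_one]
  have hχg : χ g ^ m = 1 := by
    obtain ⟨l, -, hl⟩ := hζ.eq_pow_of_pow_eq_one hgm
    rw [← map_pow, ← hl, map_pow, hχ, one_pow]
  obtain ⟨η, hη⟩ := IsAlgClosed.exists_pow_nat_eq (χ g) (NeZero.pos n)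
  have hη_card : η ^ Fintype.card Fˣ = 1 := by rw [hm, pow_mul, hη, hχg]
  refine ⟨MulChar.ofRootOfUnity (rootsOfUnity.mkOfPowEq η hη_card).2 hg, ?_⟩
  rw [MulChar.eq_iff hg, MulChar.pow_apply_coe, MulChar.ofRootOfUnity_spec,
    rootsOfUnity.coe_mkOfPowEq, hη]

section QuadraticCharacter

variable {F R : Type*} [Field F] [CommRing R] {φ : MulChar F R}

theorem apply_sq_of_isQuadratic (hφ : φ.IsQuadratic) {x : F} (hx : x ≠ 0) : φ (x ^ 2) = 1 := by
  rw [map_pow, ← MulChar.pow_apply' φ two_ne_zero, hφ.sq_eq_one,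
    MulChar.one_apply (isUnit_iff_ne_zero.mpr hx)]

theorem apply_eq_of_isQuadratic_of_mul_eq_sq (hφ : φ.IsQuadratic) {x y r : F} (hr : r ≠ 0)
    (h : x * y = r ^ 2) : φ x = φ y := by
  have hy : y ≠ 0 := right_ne_zero_of_mul (h ▸ pow_ne_zero 2 hr)
  calc φ x = φ x * φ (y ^ 2) := by rw [apply_sq_of_isQuadratic hφ hy, mul_one]
    _ = φ (r ^ 2) * φ y := by rw [← h, ← map_mul, ← map_mul]; ring_nf
    _ = φ y := by rw [apply_sq_of_isQuadratic hφ hr, one_mul]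

theorem apply_add_eq_of_isQuadratic_of_sq_add_sq (hφ : φ.IsQuadratic) (h2 : (2 : F) ≠ 0)
    {b r w : F} (hr : r ≠ 0) (hw : w ≠ 0) (h : r ^ 2 + w ^ 2 = b ^ 2) :
    φ (b + r) = φ 2 * φ (b + w) := by
  have hbr : b + r ≠ 0 := fun h0 => pow_ne_zero 2 hw (by linear_combination h + (b - r) * h0)
  have hbw : b + w ≠ 0 := fun h0 => pow_ne_zero 2 hr (by linear_combination h + (b - w) * h0)
  have hsq : (b + r) * (2 * (b + w)) = (b + r + w) ^ 2 := by linear_combination -h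
  have hne : b + r + w ≠ 0 := by
    rw [← pow_ne_zero_iff two_ne_zero, ← hsq]
    exact mul_ne_zero hbr (mul_ne_zero h2 hbw)
  rw [apply_eq_of_isQuadratic_of_mul_eq_sq hφ hne hsq, map_mul]

theorem exists_not_isSquare_of_isQuadratic (hφ : φ.IsQuadratic) (hφ1 : φ ≠ 1) :
    ∃ w : F, ¬ IsSquare w ∧ φ w = -1 := by
  obtain ⟨w, hw⟩ := MulChar.ne_one_iff.mp hφ1
  have := nontrivial_of_ne _ _ hw
  refine ⟨w, ?_, ((hφ w).resolve_left (w.isUnit.map φ).ne_zero).resolve_left hw⟩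
  rintro ⟨r, hr⟩
  have hr0 : r ≠ 0 := left_ne_zero_of_mul (hr ▸ w.ne_zero)
  exact hw (by rw [hr, ← pow_two, apply_sq_of_isQuadratic hφ hr0])

variable [Finite F]

theorem two_ne_zero_of_isQuadratic (hφ : φ.IsQuadratic) (hφ1 : φ ≠ 1) : (2 : F) ≠ 0 := by
  obtain ⟨w, hw, -⟩ := exists_not_isSquare_of_isQuadratic hφ hφ1
  exact Ring.two_ne_zero fun h => hw (FiniteField.isSquare_of_char_two h w)

theorem isSquare_mul_of_not_isSquare {x y : F} (hx : ¬ IsSquare x) (hy : ¬ IsSquare y) :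
    IsSquare (x * y) := by
  classical
  have := Fintype.ofFinite F
  have hxy : x * y ≠ 0 :=
    mul_ne_zero (by rintro rfl; exact hx .zero) (by rintro rfl; exact hy .zero)
  rw [← quadraticChar_one_iff_isSquare hxy, map_mul,
    quadraticChar_neg_one_iff_not_isSquare.mpr hx, quadraticChar_neg_one_iff_not_isSquare.mpr hy,
    neg_mul_neg, one_mul]

theorem apply_of_isQuadratic_of_not_isSquare (hφ : φ.IsQuadratic) (hφ1 : φ ≠ 1) {x : F}
    (hx : ¬ IsSquare x) : φ x = -1 := by
  obtain ⟨w, hw, hφw⟩ := exists_not_isSquare_of_isQuadratic hφ hφ1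
  obtain ⟨r, hr⟩ := isSquare_mul_of_not_isSquare hx hw
  have hr0 : r ≠ 0 := by
    rintro rfl
    rcases mul_eq_zero.mp (hr.trans (mul_zero 0)) with rfl | rfl
    exacts [hx .zero, hw .zero]
  rw [apply_eq_of_isQuadratic_of_mul_eq_sq hφ hr0 (hr.trans (pow_two r).symm), hφw]

end QuadraticCharacter

section SqrtShiftSum

variable {F R : Type*} [Field F] [Fintype F] [DecidableEq F] [CommRing R] {χ φ : MulChar F R}

/-- The sum of `χ (b + s)` over the square roots `s` of `d`, that is, the sum of `χ` over the set
of roots of the polynomial `(t - b) ^ 2 - d`. A double root is counted once. -/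
def sqrtShiftSum (χ : MulChar F R) (b d : F) : R :=
  ∑ s with s ^ 2 = d, χ (b + s)

theorem sqrtShiftSum_zero (χ : MulChar F R) (b : F) : sqrtShiftSum χ b 0 = χ b := by
  simp [sqrtShiftSum, filter_eq']

theorem sqrtShiftSum_sq (h2 : (2 : F) ≠ 0) (χ : MulChar F R) (b : F) {r : F} (hr : r ≠ 0) :
    sqrtShiftSum χ b (r ^ 2) = χ (b + r) + χ (b - r) := by
  have hroots : ({s | s ^ 2 = r ^ 2} : Finset F) = {r, -r} := by
    ext s
    simp [sq_eq_sq_iff_eq_or_eq_neg]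
  have hne : r ≠ -r := fun h => mul_ne_zero h2 hr (by linear_combination h)
  rw [sqrtShiftSum, hroots, sum_pair hne, sub_eq_add_neg]

theorem sqrtShiftSum_of_not_isSquare (χ : MulChar F R) (b : F) {d : F} (hd : ¬ IsSquare d) :
    sqrtShiftSum χ b d = 0 := by
  rw [sqrtShiftSum, filter_false_of_mem, sum_empty]
  rintro s - rfl
  exact hd (.sq s)

theorem sqrtShiftSum_of_not_isSquare_sub (hφ : φ.IsQuadratic) (hφ1 : φ ≠ 1) {b d : F}
    (hd : ¬ IsSquare (b ^ 2 - d)) : sqrtShiftSum φ b d = 0 := by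
  nontriviality R
  have h2 := two_ne_zero_of_isQuadratic hφ hφ1
  refine sum_involution (fun s _ => -s) ?_ ?_ ?_ ?_ <;> simp only [mem_filter_univ]
  · rintro s rfl
    have hprod : φ (b + s) * φ (b - s) = -1 := by
      rw [← map_mul, ← apply_of_isQuadratic_of_not_isSquare hφ hφ1 hd]
      ring_nf
    rw [← sub_eq_add_neg]
    rcases hφ (b + s) with h | h | h <;> rw [h] at hprod ⊢
    · simp at hprod
    · linear_combination hprod
    · linear_combination -hprod
  · rintro s rfl - hs
    have hs0 : s = 0 := (mul_eq_zero.mp (by linear_combination -hs : 2 * s = 0)).resolve_left h2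
    exact hd ⟨b, by rw [hs0]; ring⟩
  · rintro s rfl
    exact neg_sq s
  · exact fun s _ => neg_neg s

theorem sqrtShiftSum_self_sq (h2 : (2 : F) ≠ 0) (χ : MulChar F R) (b : F) :
    sqrtShiftSum χ b (b ^ 2) = χ 2 * sqrtShiftSum χ b 0 := by
  rcases eq_or_ne b 0 with rfl | hb
  · simp [sqrtShiftSum_zero, MulChar.map_zero]
  · rw [sqrtShiftSum_sq h2 χ b hb, sqrtShiftSum_zero, sub_self, MulChar.map_zero, add_zero,
      ← two_mul, map_mul]

theorem sqrtShiftSum_reflect_sq (hφ : φ.IsQuadratic) (h2 : (2 : F) ≠ 0) {b r w : F} (hr : r ≠ 0)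
    (hw : w ≠ 0) (h : r ^ 2 + w ^ 2 = b ^ 2) :
    sqrtShiftSum φ b (r ^ 2) = φ 2 * sqrtShiftSum φ b (w ^ 2) := by
  rw [sqrtShiftSum_sq h2 φ b hr, sqrtShiftSum_sq h2 φ b hw, mul_add, sub_eq_add_neg,
    sub_eq_add_neg, apply_add_eq_of_isQuadratic_of_sq_add_sq hφ h2 hr hw h,
    apply_add_eq_of_isQuadratic_of_sq_add_sq hφ h2 (neg_ne_zero.mpr hr) (neg_ne_zero.mpr hw)
      (by simpa using h)]

theorem sqrtShiftSum_reflect (hφ : φ.IsQuadratic) (hφ1 : φ ≠ 1) (b d : F) :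
    sqrtShiftSum φ b d = φ 2 * sqrtShiftSum φ b (b ^ 2 - d) := by
  have h2 := two_ne_zero_of_isQuadratic hφ hφ1
  by_cases hd : IsSquare d
  swap
  · rw [sqrtShiftSum_of_not_isSquare φ b hd,
      sqrtShiftSum_of_not_isSquare_sub hφ hφ1 (by rwa [sub_sub_cancel]), mul_zero]
  by_cases hd' : IsSquare (b ^ 2 - d)
  swap
  · rw [sqrtShiftSum_of_not_isSquare φ b hd', sqrtShiftSum_of_not_isSquare_sub hφ hφ1 hd',
      mul_zero]
  obtain ⟨r, rfl⟩ := (isSquare_iff_exists_sq d).mp hd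
  obtain ⟨w, hw⟩ := (isSquare_iff_exists_sq _).mp hd'
  have h : r ^ 2 + w ^ 2 = b ^ 2 := by rw [← hw, add_sub_cancel]
  rw [hw]
  rcases eq_or_ne r 0 with rfl | hr
  · have hbw : w ^ 2 = b ^ 2 := by rw [← h]; ring
    rw [hbw, sqrtShiftSum_self_sq h2, ← mul_assoc, ← map_mul, ← pow_two,
      apply_sq_of_isQuadratic hφ h2, one_mul, zero_pow two_ne_zero]
  rcases eq_or_ne w 0 with rfl | hw0
  · have hbr : r ^ 2 = b ^ 2 := by rw [← h]; ring
    rw [hbr, sqrtShiftSum_self_sq h2, zero_pow two_ne_zero]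
  exact sqrtShiftSum_reflect_sq hφ h2 hr hw0 h

theorem sum_mul_apply_sub_sq (χ : MulChar F R) (b : F) (f : F → R) :
    ∑ t, χ t * f ((t - b) ^ 2) = ∑ d, f d * sqrtShiftSum χ b d := by
  rw [← Equiv.sum_comp (Equiv.addLeft b), ← sum_fiberwise univ (· ^ 2)]
  refine sum_congr rfl fun d _ => ?_
  rw [sqrtShiftSum, mul_sum]
  refine sum_congr rfl fun s hs => ?_
  rw [Equiv.coe_addLeft, add_sub_cancel_left, (mem_filter.mp hs).2, mul_comm]

end SqrtShiftSum

theorem sum_mul_apply_sub_sq_reflect {F R : Type*} [Field F] [Fintype F] [CommRing R]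
    {φ : MulChar F R} (hφ : φ.IsQuadratic) (hφ1 : φ ≠ 1) (b : F) (f : F → R) :
    ∑ t, φ t * f ((t - b) ^ 2) = φ 2 * ∑ t, φ t * f (b ^ 2 - (t - b) ^ 2) := by
  classical
  rw [sum_mul_apply_sub_sq φ b f, sum_mul_apply_sub_sq φ b fun d => f (b ^ 2 - d), mul_sum,
    ← Equiv.sum_comp (Equiv.subLeft (b ^ 2))]
  refine sum_congr rfl fun d _ => ?_
  rw [Equiv.subLeft_apply, sqrtShiftSum_reflect hφ hφ1 b, sub_sub_cancel, mul_left_comm]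

section KloostermanSum

theorem gaussSum_mulShift_of_ne_one {F R : Type*} [Field F] [Fintype F] [CommRing R] [IsDomain R]
    {χ : MulChar F R} (hχ : χ ≠ 1) (ψ : AddChar F R) (a : F) :
    gaussSum χ (ψ.mulShift a) = χ⁻¹ a * gaussSum χ ψ := by
  rcases eq_or_ne a 0 with rfl | ha
  · rw [AddChar.mulShift_zero, gaussSum_one_right hχ, MulChar.map_zero, zero_mul]
  · exact gaussSum_mulShift_eq χ ψ (Units.mk0 a ha)

theorem sum_filter_ne_zero_eq_sum_units {G₀ M : Type*} [GroupWithZero G₀] [Fintype G₀]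
    [DecidableEq G₀] [AddCommMonoid M] (f : G₀ → M) :
    ∑ x with x ≠ 0, f x = ∑ u : G₀ˣ, f u := by
  rw [sum_subtype _ (p := (· ≠ 0)) (by simp), ← Equiv.sum_comp unitsEquivNeZero]
  rfl

variable {F R : Type*} [Field F] [Fintype F] [DecidableEq F] [CommRing R]

/-- The Kloosterman sum of `ψ` with coefficients `a` and `b`, either of which may be zero. -/
def kloostermanSum (ψ : AddChar F R) (a b : F) : R :=
  ∑ u : Fˣ, ψ (a * u + b * (u⁻¹ : Fˣ))

theorem kloostermanSum_comm (ψ : AddChar F R) (a b : F) :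
    kloostermanSum ψ a b = kloostermanSum ψ b a := by
  rw [kloostermanSum, ← Equiv.sum_comp (Equiv.inv Fˣ)]
  simp only [Equiv.inv_apply, inv_inv, add_comm, kloostermanSum]

theorem kloostermanSum_zero_zero (ψ : AddChar F R) :
    kloostermanSum ψ 0 0 = (Fintype.card F : R) - 1 := by
  rw [Fintype.card_eq_card_units_add_one (α := F)]
  simp [kloostermanSum]

theorem kloostermanSum_of_left_ne_zero (ψ : AddChar F R) {a : F} (ha : a ≠ 0) (b : F) :
    kloostermanSum ψ a b = kloostermanSum ψ 1 (a * b) := by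
  rw [kloostermanSum, kloostermanSum]
  refine Fintype.sum_equiv (Equiv.mulLeft (Units.mk0 a ha)) _ _ fun u => congrArg ψ ?_
  simp only [Equiv.coe_mulLeft, mul_inv, Units.val_mul, Units.val_inv_eq_inv_val, Units.val_mk0]
  field_simp

theorem sum_mul_ite_sub_eq_zero_and_add_eq_zero {φ : MulChar F R} (hφ : φ.IsQuadratic)
    (h2 : (2 : F) ≠ 0) {j k : F} (hj : j ≠ 0) (c : R) :
    ∑ t, φ t * (if (j + k) ^ 2 - t = 0 ∧ (j - k) ^ 2 + t = 0 then c else 0) =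
      if j ^ 2 = -k ^ 2 then c else 0 := by
  rw [Fintype.sum_eq_single ((j + k) ^ 2)]
  · have hiff : (j - k) ^ 2 + (j + k) ^ 2 = 0 ↔ j ^ 2 = -k ^ 2 := by
      rw [← mul_right_inj' h2 (b := j ^ 2)]
      exact ⟨fun h => by linear_combination h, fun h => by linear_combination h⟩
    simp only [sub_self, true_and, hiff]
    split_ifs with h
    · have hjk : j + k ≠ 0 := fun h0 =>
        mul_ne_zero h2 (pow_ne_zero 2 hj) (by linear_combination h + (j - k) * h0)
      rw [apply_sq_of_isQuadratic hφ hjk, one_mul]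
    · rw [mul_zero]
  · intro t ht
    rw [if_neg fun h => ht (sub_eq_zero.mp h.1).symm, mul_zero]

variable [IsDomain R] {ψ : AddChar F R}

theorem kloostermanSum_one_zero (hψ : ψ ≠ 1) : kloostermanSum ψ 1 0 = -1 := by
  have hne (x : F) (hx : (1 : MulChar F R) x * ψ x ≠ 0) : x ≠ 0 := by
    rintro rfl
    simp [MulChar.map_zero] at hx
  rw [← gaussSum_one_left hψ, gaussSum, ← sum_filter_of_ne fun x _ => hne x,
    sum_filter_ne_zero_eq_sum_units]
  simp [kloostermanSum, MulChar.one_apply_coe]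

theorem kloostermanSum_eq (hψ : ψ ≠ 1) (a b : F) :
    kloostermanSum ψ a b =
      kloostermanSum ψ 1 (a * b) + if a = 0 ∧ b = 0 then (Fintype.card F : R) else 0 := by
  rcases eq_or_ne a 0 with rfl | ha
  · rcases eq_or_ne b 0 with rfl | hb
    · rw [mul_zero, kloostermanSum_one_zero hψ, kloostermanSum_zero_zero, if_pos ⟨rfl, rfl⟩]
      ring
    · simp [kloostermanSum_comm ψ 0, kloostermanSum_of_left_ne_zero ψ hb, hb]
  · simp [kloostermanSum_of_left_ne_zero ψ ha, ha]

theorem gaussSum_mul_sum_eq_sum_kloostermanSum {φ : MulChar F R} (hφ : φ.IsQuadratic)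
    (hφ1 : φ ≠ 1) (ψ : AddChar F R) (a b c : F) :
    gaussSum φ ψ * ∑ x with x ≠ 0, φ (a / x - x) * ψ (x * b + a / x * c) =
      ∑ t, φ t * kloostermanSum ψ (b - t) (a * (c + t)) := by
  simp only [sum_filter_ne_zero_eq_sum_units, kloostermanSum, mul_sum]
  rw [sum_comm]
  refine sum_congr rfl fun u _ => ?_
  rw [← mul_assoc, mul_comm (gaussSum φ ψ)]
  nth_rw 1 [← hφ.inv]
  rw [← gaussSum_mulShift_of_ne_one hφ1, gaussSum, sum_mul]
  refine sum_congr rfl fun t _ => ?_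
  rw [mul_assoc, AddChar.mulShift_apply, ← AddChar.map_add_eq_mul, Units.val_inv_eq_inv_val]
  ring_nf

theorem sum_mul_kloostermanSum_sub_add {φ : MulChar F R} (hφ : φ.IsQuadratic)
    (h2 : (2 : F) ≠ 0) (hψ : ψ ≠ 1) {a : F} (ha : a ≠ 0) {j k : F} (hj : j ≠ 0) :
    ∑ t, φ t * kloostermanSum ψ ((j + k) ^ 2 - t) (a * ((j - k) ^ 2 + t)) =
      ∑ t, φ t * kloostermanSum ψ 1 (a * ((j ^ 2 + k ^ 2) ^ 2 - (t - 2 * j * k) ^ 2)) +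
        if j ^ 2 = -k ^ 2 then (Fintype.card F : R) else 0 := by
  rw [← sum_mul_ite_sub_eq_zero_and_add_eq_zero hφ h2 hj, ← sum_add_distrib]
  refine sum_congr rfl fun t _ => ?_
  have hprod : ((j + k) ^ 2 - t) * (a * ((j - k) ^ 2 + t)) =
      a * ((j ^ 2 + k ^ 2) ^ 2 - (t - 2 * j * k) ^ 2) := by ring
  rw [← mul_add, kloostermanSum_eq hψ, hprod]
  simp only [mul_eq_zero, ha, false_or]

end KloostermanSum

section OrderFour

theorem isQuadratic_sq_of_orderOf_eq_four {R R' : Type*} [CommMonoid R] [CommRing R'] [IsDomain R']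
    {χ : MulChar R R'} (hχ : orderOf χ = 4) : (χ ^ 2).IsQuadratic := by
  rw [MulChar.isQuadratic_iff_sq_eq_one, ← pow_mul, ← pow_orderOf_eq_one χ, hχ]

theorem sq_ne_one_of_orderOf_eq_four {M : Type*} [Monoid M] {x : M} (hx : orderOf x = 4) :
    x ^ 2 ≠ 1 :=
  pow_ne_one_of_lt_orderOf two_ne_zero (by rw [hx]; norm_num)

theorem isPrimitiveRoot_four_of_sq_eq_neg_one {R : Type*} [CommRing R] (h2 : (2 : R) ≠ 0)
    {i : R} (hi : i ^ 2 = -1) : IsPrimitiveRoot i 4 := by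
  have h4 : i ^ 2 ^ 1 ≠ 1 := by
    rw [pow_one, hi]
    exact fun h => h2 (by linear_combination -h)
  have horder : orderOf i = 2 ^ 2 :=
    orderOf_eq_prime_pow h4 (by linear_combination (i ^ 2 - 1) * hi)
  exact IsPrimitiveRoot.iff_orderOf.mpr horder

theorem mulChar_sq_apply_neg_one {R R' : Type*} [CommRing R] [CommMonoidWithZero R']
    (χ : MulChar R R') : (χ ^ 2) (-1) = 1 := by
  rw [MulChar.pow_apply' χ two_ne_zero, ← map_pow, neg_one_sq, map_one]

end OrderFour

section KatzSum

theorem ite_eq_add_ite_eq_neg {F R : Type*} [CommRing F] [NoZeroDivisors F] [DecidableEq F]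
    [AddMonoidWithOne R] (h2 : (2 : F) ≠ 0) {j k : F} (hk : k ≠ 0) :
    (if j = k then 1 else 0) + (if j = -k then 1 else 0) =
      if j ^ 2 = k ^ 2 then (1 : R) else 0 := by
  have hkk : k ≠ -k := fun h => mul_ne_zero h2 hk (by linear_combination h)
  rcases eq_or_ne j k with rfl | hjk
  · simp [hkk]
  · simp [sq_eq_sq_iff_eq_or_eq_neg, hjk]

variable {F : Type} [Field F] [Fintype F] [DecidableEq F]

theorem Pkatz_comm (ψ : AddChar F ℂ) (A₄ : MulChar F ℂ) (a j k : F) :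
    Pkatz ψ A₄ a j k = Pkatz ψ A₄ a k j := by
  simp only [Pkatz, mulChar_sq_apply_neg_one, eq_comm (a := j), neg_eq_iff_eq_neg, add_comm j,
    ← neg_sub k j, neg_sq]

variable {ψ : AddChar F ℂ} {A₄ : MulChar F ℂ}

theorem card_mul_Pkatz (hψ : ψ ≠ 1) (hA₄ : orderOf A₄ = 4)
    {a : F} (ha : a ≠ 0) {j k : F} (hj : j ≠ 0) (hk : k ≠ 0) :
    Fintype.card F * Pkatz ψ A₄ a j k =
      Fintype.card F * ((if j ^ 2 = k ^ 2 then 1 else 0) + (if j ^ 2 = -k ^ 2 then 1 else 0)) +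
      ∑ t, (A₄ ^ 2) t *
        kloostermanSum ψ 1 (a * ((j ^ 2 + k ^ 2) ^ 2 - (t - 2 * j * k) ^ 2)) := by
  have hφ := isQuadratic_sq_of_orderOf_eq_four hA₄
  have hφ1 := sq_ne_one_of_orderOf_eq_four hA₄
  have h2 := two_ne_zero_of_isQuadratic hφ hφ1
  have hG : gaussSum (A₄ ^ 2) ψ ^ 2 = Fintype.card F := by
    rw [gaussSum_sq hφ1 hφ (AddChar.IsPrimitive.of_ne_one hψ), mulChar_sq_apply_neg_one, one_mul]
  have hG0 : gaussSum (A₄ ^ 2) ψ ≠ 0 := by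
    rw [← pow_ne_zero_iff two_ne_zero, hG]
    exact Nat.cast_ne_zero.mpr Fintype.card_ne_zero
  have hcard_inv : (Fintype.card F : ℂ) * (gaussSum (A₄ ^ 2) ψ)⁻¹ = gaussSum (A₄ ^ 2) ψ := by
    rw [← hG, pow_two, mul_inv_cancel_right₀ hG0]
  rw [Pkatz, mulChar_sq_apply_neg_one, one_mul, ite_eq_add_ite_eq_neg h2 hk, mul_add, ← mul_assoc,
    hcard_inv, gaussSum_mul_sum_eq_sum_kloostermanSum hφ hφ1,
    sum_mul_kloostermanSum_sub_add hφ h2 hψ ha hj, mul_add (Fintype.card F : ℂ),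
    mul_ite (j ^ 2 = -k ^ 2), mul_one, mul_zero]
  ring

theorem Pkatz_mul_left (hψ : ψ ≠ 1) (hA₄ : orderOf A₄ = 4) {a i : F} (ha : a ≠ 0)
    (hi : i ^ 2 = -1) {j k : F} (hj : j ≠ 0) (hk : k ≠ 0) :
    Pkatz ψ A₄ a (i * j) k = Pkatz ψ A₄ a j k := by
  have hφ := isQuadratic_sq_of_orderOf_eq_four hA₄
  have hφ1 := sq_ne_one_of_orderOf_eq_four hA₄
  have h2 := two_ne_zero_of_isQuadratic hφ hφ1
  have hi0 : i ≠ 0 := ne_zero_pow two_ne_zero (hi ▸ neg_ne_zero.mpr one_ne_zero)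
  have hi1 : i + 1 ≠ 0 := fun h => h2 (by linear_combination (1 - i) * h + hi)
  have hφi : (A₄ ^ 2) i = (A₄ ^ 2) 2 :=
    apply_eq_of_isQuadratic_of_mul_eq_sq hφ hi1 (by linear_combination -hi)
  have harg (t : F) : ((i * j) ^ 2 + k ^ 2) ^ 2 - (i * t - 2 * (i * j) * k) ^ 2 =
      (j ^ 2 + k ^ 2) ^ 2 - ((2 * j * k) ^ 2 - (t - 2 * j * k) ^ 2) := by
    linear_combination (j ^ 4 * (i ^ 2 - 1) + 2 * j ^ 2 * k ^ 2 - (t - 2 * j * k) ^ 2) * hi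
  have hcard : (Fintype.card F : ℂ) ≠ 0 := Nat.cast_ne_zero.mpr Fintype.card_ne_zero
  refine mul_left_cancel₀ hcard ?_
  rw [card_mul_Pkatz hψ hA₄ ha (mul_ne_zero hi0 hj) hk, card_mul_Pkatz hψ hA₄ ha hj hk]
  congr 1
  · simp only [mul_pow, hi, neg_one_mul, neg_eq_iff_eq_neg, neg_neg]
    rw [add_comm]
  rw [← Equiv.sum_comp (Equiv.mulLeft₀ i hi0), sum_mul_apply_sub_sq_reflect hφ hφ1 (2 * j * k)
    fun d => kloostermanSum ψ 1 (a * ((j ^ 2 + k ^ 2) ^ 2 - d)), ← hφi, mul_sum]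
  refine sum_congr rfl fun t _ => ?_
  rw [Equiv.mulLeft₀_apply, map_mul, mul_assoc, harg]

theorem Tmel2_eq_sum_units (ψ : AddChar F ℂ) (A₄ : MulChar F ℂ) (a : F) (χ₁ χ₂ : MulChar F ℂ) :
    Tmel2 ψ A₄ a χ₁ χ₂ = ∑ u : Fˣ, ∑ v : Fˣ, χ₁ u * χ₂ v * Pkatz ψ A₄ a u v := by
  simp only [Tmel2, sum_filter_ne_zero_eq_sum_units]

theorem Tmel2_comm (ψ : AddChar F ℂ) (A₄ : MulChar F ℂ) (a : F) (χ₁ χ₂ : MulChar F ℂ) :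
    Tmel2 ψ A₄ a χ₁ χ₂ = Tmel2 ψ A₄ a χ₂ χ₁ := by
  simp only [Tmel2]
  rw [sum_comm]
  simp only [Pkatz_comm ψ A₄ a, mul_comm (χ₁ _)]

theorem apply_mul_Tmel2 (hψ : ψ ≠ 1) (hA₄ : orderOf A₄ = 4) {a i : F} (ha : a ≠ 0)
    (hi : i ^ 2 = -1) (χ₁ χ₂ : MulChar F ℂ) :
    χ₁ i * Tmel2 ψ A₄ a χ₁ χ₂ = Tmel2 ψ A₄ a χ₁ χ₂ := by
  have hi0 : i ≠ 0 := ne_zero_pow two_ne_zero (hi ▸ neg_ne_zero.mpr one_ne_zero)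
  simp only [Tmel2_eq_sum_units, mul_sum]
  refine Fintype.sum_equiv (Equiv.mulLeft (Units.mk0 i hi0)) _ _ fun u =>
    sum_congr rfl fun v _ => ?_
  rw [Equiv.coe_mulLeft, Units.val_mul, Units.val_mk0, map_mul,
    Pkatz_mul_left hψ hA₄ ha hi u.ne_zero v.ne_zero]
  ring

theorem exists_eq_pow_four_of_Tmel2_ne_zero (hψ : ψ ≠ 1) (hA₄ : orderOf A₄ = 4) {a i : F}
    (ha : a ≠ 0) (hi : i ^ 2 = -1) {χ₁ χ₂ : MulChar F ℂ} (hT : Tmel2 ψ A₄ a χ₁ χ₂ ≠ 0) :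
    ∃ ν : MulChar F ℂ, χ₁ = ν ^ 4 := by
  have h2 := two_ne_zero_of_isQuadratic (isQuadratic_sq_of_orderOf_eq_four hA₄)
    (sq_ne_one_of_orderOf_eq_four hA₄)
  exact exists_eq_pow_of_apply_primitiveRoot_eq_one (isPrimitiveRoot_four_of_sq_eq_neg_one h2 hi)
    ((mul_eq_right₀ hT).mp (apply_mul_Tmel2 hψ hA₄ ha hi χ₁ χ₂))

end KatzSum

/-- `T(χ₁,χ₂) = 0` when `χ₁` and `χ₂` are not both fourth powers. -/
theorem T2_eq_zero_of_not_both_fourth_powers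
    (F : Type) [Field F] [Fintype F] [DecidableEq F]
    (hq : Fintype.card F % 4 = 1)
    (ψ : AddChar F ℂ) (hψ : ψ ≠ 1)
    (A₄ : MulChar F ℂ) (hA₄ : orderOf A₄ = 4)
    (a : F) (ha : a ≠ 0)
    (χ₁ χ₂ : MulChar F ℂ)
    (h : ¬ ∃ ν₁ ν₂ : MulChar F ℂ, χ₁ = ν₁ ^ 4 ∧ χ₂ = ν₂ ^ 4) :
    Tmel2 ψ A₄ a χ₁ χ₂ = 0 := by
  obtain ⟨i, hi⟩ : IsSquare (-1 : F) := FiniteField.isSquare_neg_one_iff.mpr (by rw [hq]; norm_num)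
  have hi2 : i ^ 2 = -1 := by rw [pow_two, hi]
  by_contra hT
  obtain ⟨ν₁, hν₁⟩ := exists_eq_pow_four_of_Tmel2_ne_zero hψ hA₄ ha hi2 hT
  rw [Tmel2_comm] at hT
  obtain ⟨ν₂, hν₂⟩ := exists_eq_pow_four_of_Tmel2_ne_zero hψ hA₄ ha hi2 hT
  exact h ⟨ν₁, ν₂, hν₁, hν₂⟩
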